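/- There exist a set S of nonnegative integers and a sequence θ_j ∈ (0,1/2), j ≥ 0, such that, with Θ_k = θ_0 θ_1 ⋯ θ_{k−1}: (a) Θ_k^{1/k} → 1/2 as k → ∞; (b) there exists ε > 0 such that θ_j, θ_{j+1} ∈ (ε, 1/2 − ε) for infinitely many j ∈ S with j+1 ∈ S; and (c) for every p ∈ (1,2], ∫_0^∞ ( ∑_{k∈S} 2^k Θ_k / (1 + (1−2θ_k) Θ_k ξ) · ∏_{j=0}^{k−1} |cos((1−θ_j) Θ_j π ξ)| )^p dξ < ∞. -/

import Mathlib

open MeasureTheory Filter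
open scoped ENNReal Real

/-- `Θ_k = θ_0 θ_1 ⋯ θ_{k-1}`. -/
noncomputable def Theta (θ : ℕ → ℝ) (k : ℕ) : ℝ := ∏ j ∈ Finset.range k, θ j

/-- The majorant `H(ξ) = ∑_{k∈S} 2^k Θ_k / (1 + (1-2θ_k) Θ_k ξ) ∏_{j<k} |cos((1-θ_j) Θ_j π ξ)|`. -/
noncomputable def Hfun (θ : ℕ → ℝ) (S : Set ℕ) (ξ : ℝ) : ℝ :=
  ∑' k : S, 2 ^ (k : ℕ) * Theta θ k / (1 + (1 - 2 * θ (k : ℕ)) * Theta θ k * ξ) *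
    ∏ j ∈ Finset.range (k : ℕ), |Real.cos ((1 - θ j) * Theta θ j * π * ξ)|

/-!
Group the stages `k` into blocks `i² ≤ k < (i + 1)²` and dissect so that, up to scale, block `i`
has dyadic offsets `2^(2i), …, 2, 1` and gaps of constant length `1 - 1/(i+2)`. The cosines of a
block then telescope, `∏_{r<n} |cos(2^r y)| = |sin(2^n y)| / (2^n |sin y|)`, into a kernel that
decays away from a lattice. Hence the `p`-th power mass of the cosine product in a window of
length `1 / Θ_k`, uniformly in the position of the window, grows by at most a factor `K (i + 2)`
over block `i`, with `K` depending only on `p`: it is at most `K^i (i + 1)!` at `k = i²`. The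
total length `2^k Θ_k` is roughly `1 / (i + 1)!` there, up to a factor `2^i`. As `k ≈ i²`, this is
subexponential in `k`, which gives `Θ_k^{1/k} → 1/2`; and its `p`-th power beats the growth of the
mass by `(i + 1)!^{1-p}`, which dominates every geometric factor as soon as `p > 1`. The triangle
inequality in `L^p` then sums the terms.
-/

open scoped Nat

lemma lintegral_Lp_tsum_le {α ι : Type*} [Countable ι] {_ : MeasurableSpace α} {μ : Measure α}
    {F : ι → α → ℝ≥0∞} (hF : ∀ i, AEMeasurable (F i) μ) {p : ℝ} (hp : 1 ≤ p) :
    (∫⁻ a, (∑' i, F i a) ^ p ∂μ) ^ p⁻¹ ≤ ∑' i, (∫⁻ a, F i a ^ p ∂μ) ^ p⁻¹ := by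
  have hp0 : 0 < p := by positivity
  have partial_sums (s : Finset ι) :
      (∫⁻ a, (∑ i ∈ s, F i a) ^ p ∂μ) ^ p⁻¹ ≤ ∑' i, (∫⁻ a, F i a ^ p ∂μ) ^ p⁻¹ := by
    have := eLpNorm'_sum_le (s := s) (fun i _ ↦ (hF i).aestronglyMeasurable) hp
    simp only [eLpNorm', enorm_eq_self, Finset.sum_apply, one_div] at this
    exact this.trans (ENNReal.sum_le_tsum s)
  have tsum_rpow (a : α) : (∑' i, F i a) ^ p = ⨆ s : Finset ι, (∑ i ∈ s, F i a) ^ p := by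
    rw [ENNReal.tsum_eq_iSup_sum]
    exact (ENNReal.orderIsoRpow p hp0).map_iSup _
  simp only [tsum_rpow]
  rw [lintegral_iSup_directed, ENNReal.rpow_inv_le_iff hp0]
  · exact iSup_le fun s ↦ (ENNReal.rpow_inv_le_iff hp0).1 (partial_sums s)
  · exact fun s ↦ (Finset.aemeasurable_fun_sum s fun i _ ↦ hF i).pow_const p
  · exact Monotone.directed_le fun s t hst a ↦
      ENNReal.rpow_le_rpow (Finset.sum_le_sum_of_subset hst) hp0.le

lemma ofReal_tsum_le {ι : Type*} {f : ι → ℝ} (hf : ∀ i, 0 ≤ f i) :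
    ENNReal.ofReal (∑' i, f i) ≤ ∑' i, ENNReal.ofReal (f i) := by
  by_cases hs : Summable f
  · exact (ENNReal.ofReal_tsum_of_nonneg hf hs).le
  · simp [tsum_eq_zero_of_not_summable hs]

/-- The sum `∑_{n ≥ 1} n^{-p}`, infinite for `p ≤ 1`. -/
noncomputable def zetaSum (p : ℝ) : ℝ≥0∞ := ∑' n : ℕ, ((n + 1 : ℝ≥0∞) ^ p)⁻¹

lemma zetaSum_ne_top {p : ℝ} (hp : 1 < p) : zetaSum p ≠ ⊤ := by
  have hs : Summable fun n : ℕ ↦ ((n + 1 : NNReal) ^ p)⁻¹ := by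
    exact_mod_cast (NNReal.summable_nat_add_iff 1).2 (NNReal.summable_rpow_inv.2 hp)
  have hcoe (n : ℕ) : (((n + 1 : NNReal) ^ p)⁻¹ : NNReal) = ((n + 1 : ℝ≥0∞) ^ p)⁻¹ := by
    rw [ENNReal.coe_inv (by positivity), ENNReal.coe_rpow_of_ne_zero (by positivity),
      ENNReal.coe_add, ENNReal.coe_natCast, ENNReal.coe_one]
  simpa only [zetaSum, ← hcoe] using ENNReal.tsum_coe_ne_top_iff_summable.2 hs

lemma exists_pow_mul_factorial_rpow_neg_le {R : ℝ≥0∞} (hR : R ≠ ⊤) {c : ℝ} (hc : 0 < c) :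
    ∃ M ≠ ⊤, ∀ n : ℕ, R ^ n * (n ! : ℝ≥0∞) ^ (-c) ≤ M := by
  lift R to NNReal using hR
  obtain ⟨x, hx0, hxR⟩ : ∃ x : ℝ, 0 ≤ x ∧ x ^ c = R :=
    ⟨(R : ℝ) ^ c⁻¹, by positivity, Real.rpow_inv_rpow R.2 hc.ne'⟩
  refine ⟨ENNReal.ofReal (Real.exp x) ^ c, by simp [hc.le], fun n ↦ ?_⟩
  have hx : (R : ℝ≥0∞) = ENNReal.ofReal x ^ c := by
    rw [ENNReal.ofReal_rpow_of_nonneg hx0 hc.le, hxR, ENNReal.ofReal_coe_nnreal]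
  have hexp : ENNReal.ofReal x ^ n ≤ ENNReal.ofReal (Real.exp x) * n ! := by
    rw [← ENNReal.ofReal_pow hx0, ← ENNReal.ofReal_natCast,
      ← ENNReal.ofReal_mul (by positivity)]
    have := Real.pow_div_factorial_le_exp x hx0 n
    exact ENNReal.ofReal_le_ofReal ((div_le_iff₀ (by positivity)).1 this)
  rw [ENNReal.rpow_neg, ← div_eq_mul_inv]
  refine ENNReal.div_le_of_le_mul ?_
  calc (R : ℝ≥0∞) ^ n = (ENNReal.ofReal x ^ n) ^ c := by
        rw [hx, ← ENNReal.rpow_mul_natCast, ← ENNReal.rpow_natCast_mul, mul_comm]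
    _ ≤ (ENNReal.ofReal (Real.exp x) * n !) ^ c := ENNReal.rpow_le_rpow hexp hc.le
    _ = ENNReal.ofReal (Real.exp x) ^ c * (n ! : ℝ≥0∞) ^ c :=
        ENNReal.mul_rpow_of_nonneg _ _ hc.le

lemma tendsto_log_factorial_sqrt_div_atTop :
    Tendsto (fun k : ℕ ↦ Real.log (k.sqrt + 2)! / k) atTop (nhds 0) := by
  have hsqrt : Tendsto (fun k : ℕ ↦ ((k.sqrt + 2 : ℕ) : ℝ)) atTop atTop :=
    tendsto_natCast_atTop_atTop.comp <| (tendsto_add_atTop_nat 2).comp <|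
      tendsto_atTop.2 fun b ↦ (eventually_ge_atTop (b ^ 2)).mono fun _ ↦ Nat.le_sqrt'.2
  have hlog : Tendsto (fun k : ℕ ↦ 9 * (Real.log (k.sqrt + 2 : ℕ) / (k.sqrt + 2 : ℕ)))
      atTop (nhds 0) := by
    simpa using (Real.isLittleO_log_id_atTop.tendsto_div_nhds_zero.comp hsqrt).const_mul 9
  refine squeeze_zero' (.of_forall fun k ↦ by positivity) ?_ hlog
  filter_upwards [eventually_ge_atTop 1] with k hk
  set m := k.sqrt + 2
  have : 0 < m := by positivity
  have hmk : (m : ℝ) * m ≤ 9 * k := by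
    have one_le_sqrt : 1 ≤ k.sqrt := Nat.le_sqrt'.2 hk
    have sqrt_sq_le : k.sqrt ^ 2 ≤ k := Nat.sqrt_le' k
    have : (k.sqrt + 2) * (k.sqrt + 2) ≤ 9 * k := by nlinarith [one_le_sqrt, sqrt_sq_le]
    exact_mod_cast this
  have hfact : Real.log m ! ≤ m * Real.log m := by
    rw [← Real.log_pow]
    exact Real.log_le_log (by positivity) (by exact_mod_cast Nat.factorial_le_pow m)
  rw [mul_div_assoc', div_le_div_iff₀ (by positivity) (by positivity)]
  calc Real.log m ! * m ≤ m * Real.log m * m := by gcongr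
    _ = Real.log m * (m * m) := by ring
    _ ≤ Real.log m * (9 * k) := by gcongr
    _ = 9 * Real.log m * k := by ring

lemma tendsto_rpow_one_div_of_inv_factorial_sqrt_le {a : ℕ → ℝ}
    (ha : ∀ k, ((k.sqrt + 2)! : ℝ)⁻¹ ≤ a k) (ha' : ∀ k, a k ≤ 1) :
    Tendsto (fun k : ℕ ↦ a k ^ ((1 : ℝ) / k)) atTop (nhds 1) := by
  have pos (k : ℕ) : 0 < a k := lt_of_lt_of_le (by positivity) (ha k)
  have hlow : Tendsto (fun k : ℕ ↦ Real.exp (-(Real.log (k.sqrt + 2)! / k))) atTop (nhds 1) := by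
    simpa using tendsto_log_factorial_sqrt_div_atTop.neg.rexp
  refine tendsto_of_tendsto_of_tendsto_of_le_of_le hlow tendsto_const_nhds (fun k ↦ ?_)
    fun k ↦ Real.rpow_le_one (pos k).le (ha' k) (by positivity)
  have hlog : -Real.log (k.sqrt + 2)! ≤ Real.log (a k) := by
    rw [← Real.log_inv]
    exact Real.log_le_log (by positivity) (ha k)
  rw [Real.rpow_def_of_pos (pos k), mul_one_div, ← neg_div]
  gcongr

/-! ### Uniformly local mass -/

/-- The uniformly local mass of `F` at scale `h`: the supremum of the integrals of `F` over all
windows of length `h`. It measures cosine products without reference to the position of the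
window, which is what makes block-by-block estimates composable. -/
noncomputable def uniformLocalMass (F : ℝ → ℝ≥0∞) (h : ℝ) : ℝ≥0∞ :=
  ⨆ x, ∫⁻ ξ in Set.Ioc x (x + h), F ξ

section UniformLocalMass

variable {F : ℝ → ℝ≥0∞} {h T p : ℝ}

lemma setLIntegral_Ioc_le_uniformLocalMass (F : ℝ → ℝ≥0∞) (h x : ℝ) :
    ∫⁻ ξ in Set.Ioc x (x + h), F ξ ≤ uniformLocalMass F h :=
  le_iSup (fun x ↦ ∫⁻ ξ in Set.Ioc x (x + h), F ξ) x

lemma setLIntegral_Ioc_mul_le {ψ : ℝ → ℝ≥0∞} {c : ℝ≥0∞} {x : ℝ} (hc : c ≠ ⊤)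
    (hψ : ∀ ξ ∈ Set.Ioc x (x + h), ψ ξ ≤ c) :
    ∫⁻ ξ in Set.Ioc x (x + h), F ξ * ψ ξ ≤ uniformLocalMass F h * c := by
  calc ∫⁻ ξ in Set.Ioc x (x + h), F ξ * ψ ξ
      ≤ ∫⁻ ξ in Set.Ioc x (x + h), F ξ * c :=
        setLIntegral_mono' measurableSet_Ioc fun ξ hξ ↦ mul_le_mul_right (hψ ξ hξ) _
    _ = (∫⁻ ξ in Set.Ioc x (x + h), F ξ) * c := lintegral_mul_const' _ _ hc
    _ ≤ uniformLocalMass F h * c :=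
        mul_le_mul_left (setLIntegral_Ioc_le_uniformLocalMass F h x) _

lemma uniformLocalMass_nat_mul_le (F : ℝ → ℝ≥0∞) (hh : 0 ≤ h) (q : ℕ) :
    uniformLocalMass F (q * h) ≤ q * uniformLocalMass F h := by
  refine iSup_le fun x ↦ ?_
  induction q with
  | zero => simp
  | succ q ih =>
    have hsplit : Set.Ioc x (x + (q + 1 : ℕ) * h) =
        Set.Ioc x (x + q * h) ∪ Set.Ioc (x + q * h) (x + q * h + h) := by
      rw [Set.Ioc_union_Ioc_eq_Ioc (by nlinarith [q.cast_nonneg (α := ℝ)]) (by linarith)]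
      push_cast
      ring_nf
    rw [hsplit]
    refine (lintegral_union_le _ _ _).trans ?_
    push_cast
    rw [add_mul, one_mul]
    exact add_le_add ih (setLIntegral_Ioc_le_uniformLocalMass F h _)

lemma ofReal_inv_one_add_rpow_le {n : ℕ} {t : ℝ} (ht : n ≤ t) (hp : 0 ≤ p) :
    ENNReal.ofReal (1 + t)⁻¹ ^ p ≤ ((n + 1 : ℝ≥0∞) ^ p)⁻¹ := by
  have hpos : 0 < 1 + t := by linarith [n.cast_nonneg (α := ℝ)]
  rw [← ENNReal.inv_rpow]
  refine ENNReal.rpow_le_rpow ?_ hp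
  rw [ENNReal.ofReal_inv_of_pos hpos, ENNReal.inv_le_inv, add_comm 1 t]
  exact_mod_cast ENNReal.ofReal_le_ofReal (add_le_add_left ht 1)

lemma lintegral_mul_decay_le (hh : 0 < h) (hTh : 1 ≤ T * h) (hp : 0 ≤ p) (a : ℝ) :
    ∫⁻ ξ, F ξ * ENNReal.ofReal (1 + T * |ξ - a|)⁻¹ ^ p ≤
      2 * zetaSum p * uniformLocalMass F h := by
  set ψ : ℝ → ℝ≥0∞ := fun ξ ↦ ENNReal.ofReal (1 + T * |ξ - a|)⁻¹ ^ p
  set I : ℤ → ℝ≥0∞ := fun m ↦ ∫⁻ ξ in Set.Ioc (a + m * h) (a + m * h + h), F ξ * ψ ξ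
  have hT : 0 < T := pos_of_mul_pos_left (one_pos.trans_le hTh) hh.le
  have decay {n : ℕ} {ξ : ℝ} (hξ : n * h ≤ |ξ - a|) : ψ ξ ≤ ((n + 1 : ℝ≥0∞) ^ p)⁻¹ := by
    refine ofReal_inv_one_add_rpow_le ?_ hp
    calc (n : ℝ) ≤ n * (T * h) := le_mul_of_one_le_right n.cast_nonneg hTh
      _ = T * (n * h) := by ring
      _ ≤ T * |ξ - a| := by gcongr
  have piece {n : ℕ} {m : ℤ}
      (hm : ∀ ξ ∈ Set.Ioc (a + m * h) (a + m * h + h), n * h ≤ |ξ - a|) :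
      I m ≤ uniformLocalMass F h * ((n + 1 : ℝ≥0∞) ^ p)⁻¹ :=
    setLIntegral_Ioc_mul_le (by simp) fun ξ hξ ↦ decay (hm ξ hξ)
  have hcover : ⋃ m : ℤ, Set.Ioc (a + m * h) (a + m * h + h) = Set.univ := by
    simpa [add_mul, ← add_assoc] using iUnion_Ioc_add_zsmul hh a
  calc ∫⁻ ξ, F ξ * ψ ξ
      ≤ ∑' m : ℤ, I m := by
        rw [← setLIntegral_univ, ← hcover]
        exact lintegral_iUnion_le _ _
    _ = (∑' n : ℕ, I n) + ∑' n : ℕ, I (-(n + 1 : ℤ)) :=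
        tsum_of_nat_of_neg_add_one ENNReal.summable ENNReal.summable
    _ ≤ uniformLocalMass F h * zetaSum p + uniformLocalMass F h * zetaSum p := by
        simp only [zetaSum, ← ENNReal.tsum_mul_left]
        gcongr with n n
        · refine piece fun ξ hξ ↦ le_trans ?_ (le_abs_self _)
          have := hξ.1
          push_cast at this
          linarith
        · refine piece fun ξ hξ ↦ le_trans ?_ (neg_le_abs _)
          have := hξ.2
          push_cast at this
          linarith
    _ = 2 * zetaSum p * uniformLocalMass F h := by ring

end UniformLocalMass

/-! ### Dyadic cosine products -/

lemma prod_abs_cos_two_pow_mul (n : ℕ) (y : ℝ) :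
    (∏ r ∈ Finset.range n, |Real.cos (2 ^ r * y)|) * (2 ^ n * |Real.sin y|) =
      |Real.sin (2 ^ n * y)| := by
  induction n with
  | zero => simp
  | succ n ih =>
    have hdouble : |Real.sin (2 ^ (n + 1) * y)| =
        2 * |Real.sin (2 ^ n * y)| * |Real.cos (2 ^ n * y)| := by
      rw [pow_succ', mul_assoc, Real.sin_two_mul, abs_mul, abs_mul, abs_two]
    rw [hdouble, ← ih, Finset.prod_range_succ]
    ring

lemma two_mul_abs_sub_round_le_abs_sin (x : ℝ) : 2 * |x - round x| ≤ |Real.sin (π * x)| := by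
  have hsmall : |π * (x - round x)| ≤ π / 2 := by
    rw [abs_mul, abs_of_pos Real.pi_pos]
    nlinarith [abs_sub_round x, Real.pi_pos]
  calc 2 * |x - round x| = 2 / π * |π * (x - round x)| := by
        rw [abs_mul, abs_of_pos Real.pi_pos]
        field_simp
    _ ≤ |Real.sin (π * (x - round x))| := Real.mul_abs_le_abs_sin hsmall
    _ = |Real.sin (π * x)| := by
        rw [mul_sub, mul_comm π (round x : ℝ), Real.sin_sub_int_mul_pi, abs_mul, abs_neg_one_zpow,
          one_mul]

lemma prod_abs_cos_two_pow_mul_le (n : ℕ) (x : ℝ) :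
    ∏ r ∈ Finset.range n, |Real.cos (2 ^ r * (π * x))| ≤
      2 * (1 + 2 ^ (n + 1) * |x - round x|)⁻¹ := by
  set P := ∏ r ∈ Finset.range n, |Real.cos (2 ^ r * (π * x))|
  have : 0 ≤ P := by positivity
  have hP1 : P ≤ 1 := Finset.prod_le_one (fun _ _ ↦ abs_nonneg _) fun _ _ ↦ Real.abs_cos_le_one _
  have hsin : P * (2 ^ (n + 1) * |x - round x|) ≤ 1 := by
    calc P * (2 ^ (n + 1) * |x - round x|) = P * (2 ^ n * (2 * |x - round x|)) := by ring
      _ ≤ P * (2 ^ n * |Real.sin (π * x)|) := by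
          gcongr
          exact two_mul_abs_sub_round_le_abs_sin x
      _ = |Real.sin (2 ^ n * (π * x))| := prod_abs_cos_two_pow_mul n _
      _ ≤ 1 := Real.abs_sin_le_one _
  rw [← div_eq_mul_inv, le_div_iff₀ (by positivity)]
  linarith

lemma round_eq_or_eq_add_one_of_mem_Ioc {f x ξ : ℝ} (hf : 0 < f) (hξ : ξ ∈ Set.Ioc x (x + 1 / f)) :
    round (f * ξ) = round (f * x) ∨ round (f * ξ) = round (f * x) + 1 := by
  have hlow : f * x ≤ f * ξ := by gcongr; exact hξ.1.le
  have hup : f * ξ ≤ f * x + 1 := by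
    calc f * ξ ≤ f * (x + 1 / f) := by gcongr; exact hξ.2
      _ = f * x + 1 := by field_simp
  have round_mono {a b : ℝ} (hab : a ≤ b) : round a ≤ round b := by
    rw [round_eq, round_eq]
    gcongr
  have h₁ := round_mono hlow
  have h₂ := round_mono hup
  rw [round_add_one] at h₂
  lia

lemma measurableSet_round_mul_eq (f : ℝ) (c : ℤ) : MeasurableSet {ξ : ℝ | round (f * ξ) = c} := by
  have : Measurable fun ξ : ℝ ↦ round (f * ξ) := by
    simp only [round_eq]
    fun_prop
  exact this (measurableSet_singleton c)

section CosMass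

variable {f h p : ℝ} {n : ℕ}

lemma setLIntegral_round_mul_eq_mul_prod_cos_le (F : ℝ → ℝ≥0∞) (hf : 0 < f) (hh : 0 < h)
    (hfh : 1 ≤ 2 ^ (n + 1) * f * h) (hp : 0 ≤ p) (c : ℤ) :
    ∫⁻ ξ in {ξ | round (f * ξ) = c}, F ξ *
        ENNReal.ofReal (∏ r ∈ Finset.range n, |Real.cos (2 ^ r * (π * (f * ξ)))|) ^ p ≤
      2 ^ p * (2 * zetaSum p) * uniformLocalMass F h := by
  set P : ℝ → ℝ≥0∞ := fun ξ ↦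
    ENNReal.ofReal (∏ r ∈ Finset.range n, |Real.cos (2 ^ r * (π * (f * ξ)))|) ^ p
  set ψ : ℝ → ℝ≥0∞ := fun ξ ↦ ENNReal.ofReal (1 + 2 ^ (n + 1) * f * |ξ - c / f|)⁻¹ ^ p
  have decay {ξ : ℝ} (hξ : round (f * ξ) = c) : P ξ ≤ 2 ^ p * ψ ξ := by
    have hdist : |f * ξ - c| = f * |ξ - c / f| := by
      rw [← abs_of_pos hf, ← abs_mul, abs_of_pos hf]
      congr 1
      field_simp
    rw [← ENNReal.mul_rpow_of_nonneg _ _ hp, ← ENNReal.ofReal_ofNat 2,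
      ← ENNReal.ofReal_mul zero_le_two, mul_assoc _ f, ← hdist, ← hξ]
    exact ENNReal.rpow_le_rpow
      (ENNReal.ofReal_le_ofReal (prod_abs_cos_two_pow_mul_le n (f * ξ))) hp
  calc ∫⁻ ξ in {ξ | round (f * ξ) = c}, F ξ * P ξ
      ≤ ∫⁻ ξ in {ξ | round (f * ξ) = c}, 2 ^ p * (F ξ * ψ ξ) := by
        refine setLIntegral_mono' (measurableSet_round_mul_eq f c) fun ξ hξ ↦ ?_
        rw [mul_left_comm]
        gcongr
        exact decay hξ
    _ ≤ ∫⁻ ξ, 2 ^ p * (F ξ * ψ ξ) := setLIntegral_le_lintegral _ _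
    _ = 2 ^ p * ∫⁻ ξ, F ξ * ψ ξ :=
        lintegral_const_mul' _ _ (ENNReal.rpow_ne_top_of_nonneg hp (by simp))
    _ ≤ 2 ^ p * (2 * zetaSum p) * uniformLocalMass F h := by
        rw [mul_assoc]
        gcongr
        exact lintegral_mul_decay_le hh hfh hp _

/-- The factor by which multiplication by the `p`-th power of a dyadic cosine product can
increase the uniformly local mass, see `uniformLocalMass_mul_prod_cos_le`. -/
noncomputable def cosMassFactor (p : ℝ) : ℝ≥0∞ := 2 * (2 ^ p * (2 * zetaSum p))

lemma cosMassFactor_ne_top (hp : 1 < p) : cosMassFactor p ≠ ⊤ := by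
  have : (2 : ℝ≥0∞) ^ p ≠ ⊤ := ENNReal.rpow_ne_top_of_nonneg (by linarith) (by simp)
  simp [cosMassFactor, ENNReal.mul_eq_top, this, zetaSum_ne_top hp]

lemma uniformLocalMass_mul_prod_cos_le (F : ℝ → ℝ≥0∞) (hf : 0 < f) (hh : 0 < h)
    (hfh : 1 ≤ 2 ^ (n + 1) * f * h) (hp : 0 ≤ p) :
    uniformLocalMass (fun ξ ↦ F ξ *
      ENNReal.ofReal (∏ r ∈ Finset.range n, |Real.cos (2 ^ r * (π * (f * ξ)))|) ^ p) (1 / f) ≤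
      cosMassFactor p * uniformLocalMass F h := by
  refine iSup_le fun x ↦ ?_
  set c := round (f * x)
  have hcover : Set.Ioc x (x + 1 / f) ⊆ {ξ | round (f * ξ) = c} ∪ {ξ | round (f * ξ) = c + 1} :=
    fun ξ hξ ↦ round_eq_or_eq_add_one_of_mem_Ioc hf hξ
  have hcell := setLIntegral_round_mul_eq_mul_prod_cos_le F hf hh hfh hp
  refine ((lintegral_mono_set hcover).trans (lintegral_union_le _ _ _)).trans ?_
  rw [cosMassFactor, two_mul, add_mul]
  exact add_le_add (hcell c) (hcell (c + 1))

end CosMass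

/-! ### The dissection ratios -/

section Dissection

variable {θ : ℕ → ℝ}

lemma Theta_succ (θ : ℕ → ℝ) (k : ℕ) : Theta θ (k + 1) = Theta θ k * θ k :=
  Finset.prod_range_succ _ _

lemma Theta_pos (hθ : ∀ j, 0 < θ j) (k : ℕ) : 0 < Theta θ k :=
  Finset.prod_pos fun j _ ↦ hθ j

/-- The total length `2^k Θ_k` of the `2^k` intervals at stage `k` of the dissection with
ratios `θ`. -/
noncomputable def stageLength (θ : ℕ → ℝ) (k : ℕ) : ℝ := 2 ^ k * Theta θ k

lemma stageLength_zero (θ : ℕ → ℝ) : stageLength θ 0 = 1 := by simp [stageLength, Theta]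

lemma stageLength_pos (hθ : ∀ j, 0 < θ j) (k : ℕ) : 0 < stageLength θ k :=
  mul_pos (by positivity) (Theta_pos hθ k)

lemma stageLength_antitone (hθ : ∀ j, θ j ∈ Set.Ioc 0 (1 / 2)) : Antitone (stageLength θ) := by
  refine antitone_nat_of_succ_le fun k ↦ ?_
  calc stageLength θ (k + 1) = stageLength θ k * (2 * θ k) := by
        rw [stageLength, stageLength, Theta_succ]
        ring
    _ ≤ stageLength θ k :=
        mul_le_of_le_one_right (stageLength_pos (fun j ↦ (hθ j).1) k).le (by linarith [(hθ k).2])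

lemma Theta_rpow_one_div (hθ : ∀ j, 0 < θ j) {k : ℕ} (hk : k ≠ 0) :
    Theta θ k ^ ((1 : ℝ) / k) = 1 / 2 * stageLength θ k ^ ((1 : ℝ) / k) := by
  have : (2 : ℝ) ^ k * (1 / 2) ^ k = 1 := by rw [← mul_pow]; norm_num
  have hTheta : Theta θ k = (1 / 2) ^ k * stageLength θ k := by
    rw [stageLength, ← mul_assoc, mul_comm ((1 / 2 : ℝ) ^ k), this, one_mul]
  rw [hTheta, Real.mul_rpow (by positivity) (stageLength_pos hθ k).le, one_div (k : ℝ),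
    Real.pow_rpow_inv_natCast (by norm_num) hk]

/-- The product `∏_{j<k} |cos((1-θ_j) Θ_j π ξ)|` in the majorant. -/
noncomputable def cosProd (θ : ℕ → ℝ) (k : ℕ) (ξ : ℝ) : ℝ :=
  ∏ j ∈ Finset.range k, |Real.cos ((1 - θ j) * Theta θ j * π * ξ)|

lemma cosProd_nonneg (θ : ℕ → ℝ) (k : ℕ) (ξ : ℝ) : 0 ≤ cosProd θ k ξ :=
  Finset.prod_nonneg fun _ _ ↦ abs_nonneg _

/-- The `k`-th term of the majorant `Hfun`. -/
noncomputable def majorantTerm (θ : ℕ → ℝ) (k : ℕ) (ξ : ℝ) : ℝ :=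
  stageLength θ k / (1 + (1 - 2 * θ k) * Theta θ k * ξ) * cosProd θ k ξ

lemma Hfun_eq_tsum_majorantTerm (θ : ℕ → ℝ) (S : Set ℕ) (ξ : ℝ) :
    Hfun θ S ξ = ∑' k : S, majorantTerm θ k ξ := rfl

lemma measurable_majorantTerm (θ : ℕ → ℝ) (k : ℕ) : Measurable (majorantTerm θ k) := by
  unfold majorantTerm cosProd
  fun_prop

lemma majorantTerm_nonneg (hθ : ∀ j, θ j ∈ Set.Ioc 0 (1 / 2)) (k : ℕ) {ξ : ℝ} (hξ : 0 ≤ ξ) :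
    0 ≤ majorantTerm θ k ξ := by
  have hlength := stageLength_pos (fun j ↦ (hθ j).1) k
  have hTheta := Theta_pos (fun j ↦ (hθ j).1) k
  have hgap : 0 ≤ 1 - 2 * θ k := by linarith [(hθ k).2]
  have hcos := cosProd_nonneg θ k ξ
  unfold majorantTerm
  positivity

end Dissection

section Blocks

lemma exists_eq_sq_add (k : ℕ) : ∃ n r, k = k.sqrt ^ 2 + n ∧ n + r = 2 * k.sqrt := by
  have h₁ := Nat.sqrt_le' k
  have h₂ := Nat.lt_succ_sqrt' k
  rw [Nat.succ_eq_add_one, add_sq] at h₂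
  exact ⟨k - k.sqrt ^ 2, 2 * k.sqrt - (k - k.sqrt ^ 2), by lia, by lia⟩

/-- The common length of the gaps created in block `i`, the block of stages `i² ≤ k < (i + 1)²`,
in units of `blockUnit i`. -/
noncomputable def blockGap (i : ℕ) : ℝ := 1 - 1 / (i + 2)

lemma half_le_blockGap (i : ℕ) : 1 / 2 ≤ blockGap i := by
  have : 1 / ((i : ℝ) + 2) ≤ 1 / 2 := one_div_le_one_div_of_le two_pos (by simp)
  rw [blockGap]
  linarith

lemma blockGap_lt_one (i : ℕ) : blockGap i < 1 := by
  have : 0 < 1 / ((i : ℝ) + 2) := by positivity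
  rw [blockGap]
  linarith

lemma blockGap_lt_two_pow (i n : ℕ) : blockGap i < 2 ^ n :=
  (blockGap_lt_one i).trans_le (one_le_pow₀ one_le_two)

/-- The dissection ratios. With `r` the number of stages left in block `i` after stage `j`, stage
`j` splits intervals of length `2^(r+1) - blockGap i` into two of length `2^r - blockGap i`, whose
left endpoints are `2^r` apart, in units of `blockUnit i`: the gaps of a block all have the same
length, and the offsets are dyadic. -/
noncomputable def blockRatio (j : ℕ) : ℝ :=
  (2 ^ ((j.sqrt + 1) ^ 2 - 1 - j) - blockGap j.sqrt) /
    (2 ^ ((j.sqrt + 1) ^ 2 - 1 - j + 1) - blockGap j.sqrt)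

/-- The unit of length of block `i`, chosen so that the block starts with intervals of length
`2^(2i+1) - blockGap i`. -/
noncomputable def blockUnit (i : ℕ) : ℝ := Theta blockRatio (i ^ 2) / (2 ^ (2 * i + 1) - blockGap i)

lemma blockRatio_mem_Ioo (j : ℕ) : blockRatio j ∈ Set.Ioo (0 : ℝ) (1 / 2) := by
  set r := (j.sqrt + 1) ^ 2 - 1 - j
  have hw := half_le_blockGap j.sqrt
  have h₁ := blockGap_lt_two_pow j.sqrt r
  have h₂ := blockGap_lt_two_pow j.sqrt (r + 1)
  refine ⟨div_pos (by linarith) (by linarith), ?_⟩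
  rw [blockRatio, div_lt_div_iff₀ (by linarith) two_pos]
  linarith [pow_succ (2 : ℝ) r]

lemma blockRatio_pos (j : ℕ) : 0 < blockRatio j := (blockRatio_mem_Ioo j).1

lemma blockRatio_mem_Ioc (j : ℕ) : blockRatio j ∈ Set.Ioc (0 : ℝ) (1 / 2) :=
  Set.Ioo_subset_Ioc_self (blockRatio_mem_Ioo j)

variable {i n r s : ℕ}

lemma blockRatio_sq_add (h : n + r = 2 * i) :
    blockRatio (i ^ 2 + n) = (2 ^ r - blockGap i) / (2 ^ (r + 1) - blockGap i) := by
  have hsqrt : (i ^ 2 + n).sqrt = i := by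
    rw [sq]
    exact Nat.sqrt_add_eq i (by lia)
  have hr : (i + 1) ^ 2 - 1 - (i ^ 2 + n) = r := by
    rw [add_sq]
    lia
  rw [blockRatio, hsqrt, hr]

lemma blockUnit_pos (i : ℕ) : 0 < blockUnit i :=
  div_pos (Theta_pos blockRatio_pos _) (by linarith [blockGap_lt_two_pow i (2 * i + 1)])

lemma Theta_blockRatio_sq_add (h : n + s = 2 * i + 1) :
    Theta blockRatio (i ^ 2 + n) = blockUnit i * (2 ^ s - blockGap i) := by
  have ne_zero (t : ℕ) : (2 : ℝ) ^ t - blockGap i ≠ 0 := (sub_pos.2 (blockGap_lt_two_pow i t)).ne'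
  induction n generalizing s with
  | zero =>
    obtain rfl : s = 2 * i + 1 := by lia
    exact (div_mul_cancel₀ _ (ne_zero _)).symm
  | succ n ih =>
    rw [← add_assoc, Theta_succ, ih (s := s + 1) (by lia), blockRatio_sq_add (r := s) (by lia)]
    have := ne_zero (s + 1)
    field_simp

lemma Theta_blockRatio_sq (i : ℕ) :
    Theta blockRatio (i ^ 2) = blockUnit i * (2 ^ (2 * i + 1) - blockGap i) :=
  Theta_blockRatio_sq_add (n := 0) (by lia)

lemma Theta_blockRatio_succ_sq (i : ℕ) :
    Theta blockRatio ((i + 1) ^ 2) = blockUnit i / (i + 2) := by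
  have hsq : (i + 1) ^ 2 = i ^ 2 + (2 * i + 1) := by ring
  rw [hsq, Theta_blockRatio_sq_add (s := 0) (by lia), blockGap]
  ring

lemma one_sub_blockRatio_mul_Theta (h : n + r = 2 * i) :
    (1 - blockRatio (i ^ 2 + n)) * Theta blockRatio (i ^ 2 + n) = blockUnit i * 2 ^ r := by
  rw [sub_mul, one_mul, mul_comm (blockRatio _), ← Theta_succ, add_assoc,
    Theta_blockRatio_sq_add (s := r + 1) (by lia), Theta_blockRatio_sq_add (s := r) (by lia)]
  ring

lemma one_sub_two_mul_blockRatio_mul_Theta (h : n + r = 2 * i) :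
    (1 - 2 * blockRatio (i ^ 2 + n)) * Theta blockRatio (i ^ 2 + n) = blockUnit i * blockGap i := by
  rw [sub_mul, one_mul, mul_assoc, mul_comm (blockRatio _), ← Theta_succ, add_assoc,
    Theta_blockRatio_sq_add (s := r + 1) (by lia), Theta_blockRatio_sq_add (s := r) (by lia)]
  ring

lemma blockRatio_sq_add_mem_Ioo (h : n + r = 2 * i) (hr₁ : 1 ≤ r) (hr₂ : r ≤ 2) :
    blockRatio (i ^ 2 + n) ∈ Set.Ioo (1 / 50 : ℝ) (1 / 2 - 1 / 50) := by
  have hw := half_le_blockGap i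
  have hw' := blockGap_lt_one i
  rw [blockRatio_sq_add h, Set.mem_Ioo, lt_div_iff₀ (by linarith [blockGap_lt_two_pow i (r + 1)]),
    div_lt_iff₀ (by linarith [blockGap_lt_two_pow i (r + 1)])]
  interval_cases r <;> constructor <;> linarith

lemma stageLength_blockRatio_succ_sq (i : ℕ) :
    stageLength blockRatio (i ^ 2) ≤ (i + 2) * stageLength blockRatio ((i + 1) ^ 2) ∧
      (i + 2) * stageLength blockRatio ((i + 1) ^ 2) ≤ 2 * stageLength blockRatio (i ^ 2) := by
  have hnext : (i + 2) * stageLength blockRatio ((i + 1) ^ 2) =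
      2 ^ i ^ 2 * blockUnit i * 2 ^ (2 * i + 1) := by
    rw [stageLength, Theta_blockRatio_succ_sq, add_sq]
    field_simp
    ring
  have hcur : stageLength blockRatio (i ^ 2) =
      2 ^ i ^ 2 * blockUnit i * (2 ^ (2 * i + 1) - blockGap i) := by
    rw [stageLength, Theta_blockRatio_sq, mul_assoc]
  have hpow : (2 : ℝ) ≤ 2 ^ (2 * i + 1) := le_self_pow₀ one_le_two (by lia)
  have hpos : 0 < 2 ^ i ^ 2 * blockUnit i := mul_pos (by positivity) (blockUnit_pos i)
  rw [hnext, hcur, mul_left_comm 2]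
  constructor <;> gcongr <;> linarith [half_le_blockGap i, blockGap_lt_one i]

lemma inv_factorial_le_stageLength_blockRatio_sq (i : ℕ) :
    ((i + 1)! : ℝ)⁻¹ ≤ stageLength blockRatio (i ^ 2) := by
  rw [inv_le_iff_one_le_mul₀' (by positivity)]
  induction i with
  | zero => simp [stageLength_zero]
  | succ i ih =>
    calc (1 : ℝ) ≤ (i + 1)! * stageLength blockRatio (i ^ 2) := ih
      _ ≤ (i + 1)! * ((i + 2) * stageLength blockRatio ((i + 1) ^ 2)) := by
          gcongr
          exact (stageLength_blockRatio_succ_sq i).1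
      _ = (i + 1 + 1)! * stageLength blockRatio ((i + 1) ^ 2) := by
          rw [Nat.factorial_succ (i + 1)]
          push_cast
          ring

lemma stageLength_blockRatio_sq_le (i : ℕ) :
    stageLength blockRatio (i ^ 2) ≤ 2 ^ i / (i + 1)! := by
  rw [le_div_iff₀' (by positivity)]
  induction i with
  | zero => simp [stageLength_zero]
  | succ i ih =>
    calc (i + 1 + 1)! * stageLength blockRatio ((i + 1) ^ 2)
        = (i + 1)! * ((i + 2) * stageLength blockRatio ((i + 1) ^ 2)) := by
          rw [Nat.factorial_succ (i + 1)]
          push_cast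
          ring
      _ ≤ (i + 1)! * (2 * stageLength blockRatio (i ^ 2)) :=
          mul_le_mul_of_nonneg_left (stageLength_blockRatio_succ_sq i).2 (by positivity)
      _ = 2 * ((i + 1)! * stageLength blockRatio (i ^ 2)) := mul_left_comm _ _ _
      _ ≤ 2 * 2 ^ i := by gcongr
      _ = 2 ^ (i + 1) := (pow_succ' 2 i).symm

lemma tendsto_Theta_blockRatio_rpow :
    Tendsto (fun k : ℕ ↦ Theta blockRatio k ^ ((1 : ℝ) / k)) atTop (nhds (1 / 2)) := by
  have hanti := stageLength_antitone blockRatio_mem_Ioc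
  have hlow (k : ℕ) : ((k.sqrt + 2)! : ℝ)⁻¹ ≤ stageLength blockRatio k :=
    (inv_factorial_le_stageLength_blockRatio_sq (k.sqrt + 1)).trans
      (hanti (Nat.lt_succ_sqrt' k).le)
  have hup (k : ℕ) : stageLength blockRatio k ≤ 1 :=
    (hanti k.zero_le).trans_eq (stageLength_zero _)
  have h : Tendsto (fun k : ℕ ↦ 1 / 2 * stageLength blockRatio k ^ ((1 : ℝ) / k)) atTop
      (nhds (1 / 2)) := by
    simpa only [mul_one] using
      (tendsto_rpow_one_div_of_inv_factorial_sqrt_le hlow hup).const_mul (1 / 2)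
  refine h.congr' ?_
  filter_upwards [eventually_ne_atTop 0] with k hk using (Theta_rpow_one_div blockRatio_pos hk).symm

end Blocks

/-! ### Integrals of the majorant -/

section BlockEstimates

variable {i n r s : ℕ} {p : ℝ}

lemma cosProd_blockRatio_sq_add (h : n + s = 2 * i + 1) (ξ : ℝ) :
    cosProd blockRatio (i ^ 2 + n) ξ = cosProd blockRatio (i ^ 2) ξ *
      ∏ t ∈ Finset.range n, |Real.cos (2 ^ t * (π * (blockUnit i * 2 ^ s * ξ)))| := by
  rw [cosProd, cosProd, Finset.prod_range_add, ← Finset.prod_range_reflect _ n]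
  congr 1
  refine Finset.prod_congr rfl fun t ht ↦ ?_
  have ht : t < n := Finset.mem_range.1 ht
  rw [one_sub_blockRatio_mul_Theta (r := t + s) (by lia), pow_add]
  ring_nf

/-- The uniformly local `p`-th power mass of the cosine product before stage `k`, at the scale
`1 / Θ_k` of that stage. -/
noncomputable def cosProdMass (θ : ℕ → ℝ) (p : ℝ) (k : ℕ) : ℝ≥0∞ :=
  uniformLocalMass (fun ξ ↦ ENNReal.ofReal (cosProd θ k ξ) ^ p) (1 / Theta θ k)

lemma uniformLocalMass_cosProd_le (h : n + s = 2 * i + 1) (hp : 0 ≤ p) :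
    uniformLocalMass (fun ξ ↦ ENNReal.ofReal (cosProd blockRatio (i ^ 2 + n) ξ) ^ p)
      (1 / (blockUnit i * 2 ^ s)) ≤ cosMassFactor p * cosProdMass blockRatio p (i ^ 2) := by
  have hTheta := Theta_pos blockRatio_pos (i ^ 2)
  have hscale : 1 ≤ 2 ^ (n + 1) * (blockUnit i * 2 ^ s) * (1 / Theta blockRatio (i ^ 2)) := by
    rw [mul_one_div, one_le_div hTheta, Theta_blockRatio_sq, mul_left_comm, ← pow_add,
      show n + 1 + s = 2 * i + 1 + 1 by lia]
    gcongr
    · exact (blockUnit_pos i).le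
    · have hpow : (0 : ℝ) < 2 ^ (2 * i + 1) := by positivity
      linarith [half_le_blockGap i, pow_succ (2 : ℝ) (2 * i + 1)]
  simp only [cosProd_blockRatio_sq_add h, ENNReal.ofReal_mul (cosProd_nonneg _ _ _),
    ENNReal.mul_rpow_of_nonneg _ _ hp]
  exact uniformLocalMass_mul_prod_cos_le _ (mul_pos (blockUnit_pos i) (by positivity))
    (one_div_pos.2 hTheta) hscale hp

lemma cosProdMass_zero (θ : ℕ → ℝ) (p : ℝ) : cosProdMass θ p 0 = 1 := by
  simp [cosProdMass, uniformLocalMass, cosProd, Theta]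

lemma cosProdMass_blockRatio_succ_sq_le (hp : 0 ≤ p) (i : ℕ) :
    cosProdMass blockRatio p ((i + 1) ^ 2) ≤
      (i + 2 : ℕ) * (cosMassFactor p * cosProdMass blockRatio p (i ^ 2)) := by
  have hscale : 1 / Theta blockRatio ((i + 1) ^ 2) =
      (i + 2 : ℕ) * (1 / (blockUnit i * 2 ^ 0)) := by
    rw [Theta_blockRatio_succ_sq]
    push_cast
    field_simp
  have hsq : (i + 1) ^ 2 = i ^ 2 + (2 * i + 1) := by ring
  rw [cosProdMass, hscale]
  refine (uniformLocalMass_nat_mul_le _ ?_ _).trans ?_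
  · have := blockUnit_pos i
    positivity
  · rw [hsq]
    gcongr
    exact uniformLocalMass_cosProd_le (by lia) hp

lemma cosProdMass_blockRatio_sq_le (hp : 0 ≤ p) (i : ℕ) :
    cosProdMass blockRatio p (i ^ 2) ≤ cosMassFactor p ^ i * (i + 1)! := by
  induction i with
  | zero => simp [cosProdMass_zero]
  | succ i ih =>
    calc cosProdMass blockRatio p ((i + 1) ^ 2)
        ≤ (i + 2 : ℕ) * (cosMassFactor p * cosProdMass blockRatio p (i ^ 2)) :=
          cosProdMass_blockRatio_succ_sq_le hp i
      _ ≤ (i + 2 : ℕ) * (cosMassFactor p * (cosMassFactor p ^ i * (i + 1)!)) := by gcongr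
      _ = cosMassFactor p ^ (i + 1) * (i + 1 + 1)! := by
          rw [Nat.factorial_succ (i + 1), pow_succ]
          push_cast
          ring

lemma ofReal_majorantTerm_rpow (h : n + r = 2 * i) (hp : 0 ≤ p) (ξ : ℝ) :
    ENNReal.ofReal (majorantTerm blockRatio (i ^ 2 + n) ξ) ^ p =
      ENNReal.ofReal (stageLength blockRatio (i ^ 2 + n)) ^ p *
        (ENNReal.ofReal (cosProd blockRatio (i ^ 2 + n) ξ) ^ p *
          ENNReal.ofReal (1 + blockUnit i * blockGap i * ξ)⁻¹ ^ p) := by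
  rw [majorantTerm, one_sub_two_mul_blockRatio_mul_Theta h, div_eq_mul_inv, mul_assoc,
    mul_comm _⁻¹, ENNReal.ofReal_mul (stageLength_pos blockRatio_pos _).le,
    ENNReal.ofReal_mul (cosProd_nonneg _ _ _), ENNReal.mul_rpow_of_nonneg _ _ hp,
    ENNReal.mul_rpow_of_nonneg _ _ hp]

lemma setLIntegral_majorantTerm_rpow_le (h : n + r = 2 * i) (hp : 0 ≤ p) :
    ∫⁻ ξ in Set.Ioi 0, ENNReal.ofReal (majorantTerm blockRatio (i ^ 2 + n) ξ) ^ p ≤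
      ENNReal.ofReal (stageLength blockRatio (i ^ 2 + n)) ^ p *
        (2 * zetaSum p * (2 ^ (r + 2) * (cosMassFactor p * cosProdMass blockRatio p (i ^ 2)))) := by
  set k := i ^ 2 + n
  set T := blockUnit i * blockGap i
  set h₀ := 1 / (blockUnit i * 2 ^ (r + 1))
  set F : ℝ → ℝ≥0∞ := fun ξ ↦ ENNReal.ofReal (cosProd blockRatio k ξ) ^ p
  have hunit := blockUnit_pos i
  have hh₀ : 0 < h₀ := by positivity
  have hTh : 1 ≤ T * ((2 ^ (r + 2) : ℕ) * h₀) := by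
    calc 1 ≤ 2 * blockGap i := by linarith [half_le_blockGap i]
      _ = T * ((2 ^ (r + 2) : ℕ) * h₀) := by
          simp only [T, h₀]
          push_cast
          field_simp
          ring
  calc ∫⁻ ξ in Set.Ioi 0, ENNReal.ofReal (majorantTerm blockRatio k ξ) ^ p
      = ENNReal.ofReal (stageLength blockRatio k) ^ p *
          ∫⁻ ξ in Set.Ioi 0, F ξ * ENNReal.ofReal (1 + T * |ξ - 0|)⁻¹ ^ p := by
        rw [← lintegral_const_mul' _ _ (ENNReal.rpow_ne_top_of_nonneg hp ENNReal.ofReal_ne_top)]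
        refine setLIntegral_congr_fun measurableSet_Ioi fun ξ hξ ↦ ?_
        simp only [sub_zero, abs_of_pos hξ.out, k, T, F]
        exact ofReal_majorantTerm_rpow h hp ξ
    _ ≤ ENNReal.ofReal (stageLength blockRatio k) ^ p *
          (2 * zetaSum p * uniformLocalMass F ((2 ^ (r + 2) : ℕ) * h₀)) := by
        gcongr
        exact (setLIntegral_le_lintegral _ _).trans
          (lintegral_mul_decay_le (by positivity) hTh hp 0)
    _ ≤ _ := by
        gcongr
        refine (uniformLocalMass_nat_mul_le F hh₀.le _).trans ?_
        push_cast
        gcongr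
        exact uniformLocalMass_cosProd_le (by lia) hp

lemma ofReal_stageLength_blockRatio_le (i n : ℕ) :
    ENNReal.ofReal (stageLength blockRatio (i ^ 2 + n)) ≤ 2 ^ (i + 1) * ((i + 1)! : ℝ≥0∞)⁻¹ := by
  have hle : stageLength blockRatio (i ^ 2 + n) ≤ 2 ^ (i + 1) / (i + 1)! := by
    calc stageLength blockRatio (i ^ 2 + n)
        ≤ stageLength blockRatio (i ^ 2) := stageLength_antitone blockRatio_mem_Ioc (by simp)
      _ ≤ 2 ^ i / (i + 1)! := stageLength_blockRatio_sq_le i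
      _ ≤ 2 ^ (i + 1) / (i + 1)! := by
          gcongr
          · exact one_le_two
          · exact i.le_succ
  calc ENNReal.ofReal (stageLength blockRatio (i ^ 2 + n))
      ≤ ENNReal.ofReal (2 ^ (i + 1) / (i + 1)!) := ENNReal.ofReal_le_ofReal hle
    _ = 2 ^ (i + 1) * ((i + 1)! : ℝ≥0∞)⁻¹ := by
        rw [ENNReal.ofReal_div_of_pos (by positivity), ENNReal.ofReal_pow zero_le_two,
          ENNReal.ofReal_ofNat, ENNReal.ofReal_natCast, div_eq_mul_inv]

lemma setLIntegral_majorantTerm_rpow_mul_le (h : n + r = 2 * i) (hp : 0 ≤ p) :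
    (∫⁻ ξ in Set.Ioi 0, ENNReal.ofReal (majorantTerm blockRatio (i ^ 2 + n) ξ) ^ p) *
        ((i ^ 2 + n : ℕ) + 1) ^ (2 * p) ≤
      2 * zetaSum p * ((2 ^ p * 4 * cosMassFactor p * 4 ^ (2 * p)) ^ (i + 1) *
        ((i + 1)! : ℝ≥0∞) ^ (-(p - 1))) := by
  have hweight : (((i ^ 2 + n : ℕ) + 1 : ℝ≥0∞) ^ (2 * p)) ≤ (4 ^ (2 * p)) ^ (i + 1) := by
    have hk : i ^ 2 + n + 1 ≤ 4 ^ (i + 1) := by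
      calc i ^ 2 + n + 1 ≤ (i + 1) ^ 2 := by rw [add_sq]; lia
        _ ≤ (2 ^ (i + 1)) ^ 2 := by gcongr; exact (i + 1).lt_two_pow_self.le
        _ = 4 ^ (i + 1) := by rw [← pow_mul, mul_comm, pow_mul]; rfl
    rw [← ENNReal.rpow_mul_natCast, mul_comm (2 * p) _, ENNReal.rpow_natCast_mul]
    exact ENNReal.rpow_le_rpow (by exact_mod_cast hk) (by positivity)
  have hpow : (2 : ℝ≥0∞) ^ (r + 2) ≤ 4 ^ (i + 1) := by
    calc (2 : ℝ≥0∞) ^ (r + 2) ≤ 2 ^ (2 * (i + 1)) := pow_le_pow_right₀ one_le_two (by lia)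
      _ = 4 ^ (i + 1) := by rw [pow_mul]; norm_num
  have hfact : ((i + 1)! : ℝ≥0∞) ^ (-(p - 1)) = ((i + 1)! : ℝ≥0∞)⁻¹ ^ p * (i + 1)! := by
    have : ((i + 1)! : ℝ≥0∞) ≠ 0 := by exact_mod_cast (i + 1).factorial_ne_zero
    rw [neg_sub, sub_eq_neg_add, ENNReal.rpow_add _ _ this (by simp), ENNReal.rpow_one,
      ENNReal.rpow_neg, ENNReal.inv_rpow]
  calc (∫⁻ ξ in Set.Ioi 0, ENNReal.ofReal (majorantTerm blockRatio (i ^ 2 + n) ξ) ^ p) *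
        ((i ^ 2 + n : ℕ) + 1) ^ (2 * p)
      ≤ (2 ^ (i + 1) * ((i + 1)! : ℝ≥0∞)⁻¹) ^ p * (2 * zetaSum p * (4 ^ (i + 1) *
          (cosMassFactor p * (cosMassFactor p ^ i * (i + 1)!)))) * (4 ^ (2 * p)) ^ (i + 1) := by
        refine mul_le_mul' ((setLIntegral_majorantTerm_rpow_le h hp).trans ?_) hweight
        gcongr
        · exact ofReal_stageLength_blockRatio_le i n
        · exact cosProdMass_blockRatio_sq_le hp i
    _ = _ := by
        rw [hfact, ENNReal.mul_rpow_of_nonneg _ _ hp, ← ENNReal.rpow_natCast_mul,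
          mul_comm _ p, ENNReal.rpow_mul_natCast]
        ring

lemma exists_setLIntegral_majorantTerm_rpow_mul_le (hp : 1 < p) :
    ∃ M ≠ ⊤, ∀ k : ℕ, (∫⁻ ξ in Set.Ioi 0, ENNReal.ofReal (majorantTerm blockRatio k ξ) ^ p) *
      (k + 1) ^ (2 * p) ≤ M := by
  have hrate : (2 : ℝ≥0∞) ^ p * 4 * cosMassFactor p * 4 ^ (2 * p) ≠ ⊤ := by
    have two_rpow : (2 : ℝ≥0∞) ^ p ≠ ⊤ := ENNReal.rpow_ne_top_of_nonneg (by linarith) (by simp)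
    have four_rpow : (4 : ℝ≥0∞) ^ (2 * p) ≠ ⊤ :=
      ENNReal.rpow_ne_top_of_nonneg (by linarith) (by simp)
    simp [ENNReal.mul_eq_top, two_rpow, four_rpow, cosMassFactor_ne_top hp]
  obtain ⟨M, hM, hle⟩ := exists_pow_mul_factorial_rpow_neg_le hrate (sub_pos.2 hp)
  refine ⟨2 * zetaSum p * M,
    ENNReal.mul_ne_top (ENNReal.mul_ne_top (by simp) (zetaSum_ne_top hp)) hM, fun k ↦ ?_⟩
  obtain ⟨n, r, hk, hnr⟩ := exists_eq_sq_add k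
  rw [hk]
  exact (setLIntegral_majorantTerm_rpow_mul_le hnr (by linarith)).trans (by gcongr; exact hle _)

lemma lintegral_tsum_majorantTerm_rpow_lt_top (hp : 1 < p) :
    ∫⁻ ξ in Set.Ioi 0, (∑' k, ENNReal.ofReal (majorantTerm blockRatio k ξ)) ^ p < ⊤ := by
  have hp0 : 0 < p := by linarith
  obtain ⟨M, hM, hle⟩ := exists_setLIntegral_majorantTerm_rpow_mul_le hp
  have term_le (k : ℕ) :
      (∫⁻ ξ in Set.Ioi 0, ENNReal.ofReal (majorantTerm blockRatio k ξ) ^ p) ^ p⁻¹ ≤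
        M ^ p⁻¹ * ((k + 1 : ℝ≥0∞) ^ (2 : ℝ))⁻¹ := by
    have hroot : (((k : ℝ≥0∞) + 1) ^ (2 * p)) ^ p⁻¹ = (k + 1) ^ (2 : ℝ) := by
      rw [← ENNReal.rpow_mul, mul_inv_cancel_right₀ hp0.ne']
    rw [← div_eq_mul_inv, ENNReal.le_div_iff_mul_le (by simp) (by simp), ← hroot,
      ← ENNReal.mul_rpow_of_nonneg _ _ (by positivity)]
    exact ENNReal.rpow_le_rpow (hle k) (by positivity)
  rw [← ENNReal.rpow_lt_top_iff_of_pos (inv_pos.2 hp0)]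
  calc (∫⁻ ξ in Set.Ioi 0, (∑' k, ENNReal.ofReal (majorantTerm blockRatio k ξ)) ^ p) ^ p⁻¹
      ≤ ∑' k, (∫⁻ ξ in Set.Ioi 0, ENNReal.ofReal (majorantTerm blockRatio k ξ) ^ p) ^ p⁻¹ :=
        lintegral_Lp_tsum_le
          (fun k ↦ (measurable_majorantTerm _ k).ennreal_ofReal.aemeasurable) hp.le
    _ ≤ ∑' k : ℕ, M ^ p⁻¹ * ((k + 1 : ℝ≥0∞) ^ (2 : ℝ))⁻¹ := ENNReal.tsum_le_tsum term_le
    _ = M ^ p⁻¹ * zetaSum 2 := ENNReal.tsum_mul_left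
    _ < ⊤ := ENNReal.mul_lt_top (ENNReal.rpow_lt_top_of_nonneg (by positivity) hM)
        (zetaSum_ne_top one_lt_two).lt_top

-- The bound passes through the `ℝ≥0∞`-valued sum, so the series defining `Hfun` converges for
-- almost every `ξ > 0` and the junk value `0` of a divergent sum plays no role.
lemma setLIntegral_Hfun_blockRatio_rpow_lt_top (S : Set ℕ) (hp : 1 < p) :
    ∫⁻ ξ in Set.Ioi 0, ENNReal.ofReal (Hfun blockRatio S ξ ^ p) < ⊤ := by
  refine (setLIntegral_mono' measurableSet_Ioi fun ξ hξ ↦ ?_).trans_lt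
    (lintegral_tsum_majorantTerm_rpow_lt_top hp)
  have nonneg (k : S) : 0 ≤ majorantTerm blockRatio k ξ :=
    majorantTerm_nonneg blockRatio_mem_Ioc k (le_of_lt hξ)
  rw [Hfun_eq_tsum_majorantTerm,
    ← ENNReal.ofReal_rpow_of_nonneg (tsum_nonneg nonneg) (by linarith)]
  refine ENNReal.rpow_le_rpow ((ofReal_tsum_le nonneg).trans ?_) (by linarith)
  exact ENNReal.tsum_comp_le_tsum_of_injective Subtype.val_injective
    fun k ↦ ENNReal.ofReal (majorantTerm blockRatio k ξ)

end BlockEstimates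

theorem exists_parameters_general :
    ∃ θ : ℕ → ℝ, (∀ j, θ j ∈ Set.Ioo (0 : ℝ) (1 / 2)) ∧
      Tendsto (fun k : ℕ ↦ Theta θ k ^ ((1 : ℝ) / k)) atTop (nhds (1 / 2)) ∧
      (∃ ε > (0 : ℝ), ∀ N : ℕ, ∃ j ≥ N,
        θ j ∈ Set.Ioo ε (1 / 2 - ε) ∧ θ (j + 1) ∈ Set.Ioo ε (1 / 2 - ε)) ∧
      ∀ (S : Set ℕ) (p : ℝ), 1 < p →
        (∫⁻ ξ in Set.Ioi (0 : ℝ), ENNReal.ofReal (Hfun θ S ξ ^ p)) < ⊤ := by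
  refine ⟨blockRatio, blockRatio_mem_Ioo, tendsto_Theta_blockRatio_rpow,
    ⟨1 / 50, by norm_num, fun N ↦ ⟨(N + 1) ^ 2 + 2 * N, by lia, ?_, ?_⟩⟩,
    fun S p ↦ setLIntegral_Hfun_blockRatio_rpow_lt_top S⟩
  · exact blockRatio_sq_add_mem_Ioo (r := 2) (by lia) one_le_two le_rfl
  · exact blockRatio_sq_add_mem_Ioo (n := 2 * N + 1) (r := 1) (by lia) le_rfl one_le_two

/-- **Choice of parameters.** There are a set `S` of nonnegative integers and dissection
ratios `θ_j ∈ (0,1/2)` such that: (a) `Θ_k^{1/k} → 1/2`; (b) there is `ε > 0` with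
`θ_j, θ_{j+1} ∈ (ε, 1/2-ε)` for infinitely many `j ∈ S` with `j+1 ∈ S`; and (c) for every
`p ∈ (1,2]`, `∫_0^∞ H(ξ)^p dξ < ∞`. -/
theorem exists_parameters :
    ∃ (S : Set ℕ) (θ : ℕ → ℝ), (∀ j, θ j ∈ Set.Ioo (0 : ℝ) (1 / 2)) ∧
      Tendsto (fun k : ℕ => Theta θ k ^ ((1 : ℝ) / k)) atTop (nhds (1 / 2)) ∧
      (∃ ε > (0 : ℝ), ∀ N : ℕ, ∃ j ≥ N, j ∈ S ∧ j + 1 ∈ S ∧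
        θ j ∈ Set.Ioo ε (1 / 2 - ε) ∧ θ (j + 1) ∈ Set.Ioo ε (1 / 2 - ε)) ∧
      ∀ p : ℝ, 1 < p → p ≤ 2 →
        (∫⁻ ξ in Set.Ioi (0 : ℝ), ENNReal.ofReal (Hfun θ S ξ ^ p)) < ⊤ := by
  obtain ⟨θ, hθ, hroot, hmid, hint⟩ := exists_parameters_general
  exact ⟨Set.univ, θ, hθ, hroot, by simpa using hmid, fun p hp _ ↦ hint _ p hp⟩
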